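/- Let s = (s_n)_{n∈ℕ} be any family of real polynomials such that s is a basis of ℝ[x], s_n = x^n for every n > N, and the map n ↦ deg D(s_n) is strictly increasing on {n ∈ ℕ : D(s_n) ≠ 0}. Then the set {s_n : D(s_n) = 0} spans the kernel of D, and the set of inaccessible degrees satisfies S = { m ∈ ℕ : m ≤ N + h (as integers) } \ { deg D(s_n) : 0 ≤ n ≤ N and D(s_n) ≠ 0 }. -/

import Mathlib

open Polynomial

/-! When the nonzero `D (s n)` have pairwise distinct degrees, leading terms cannot cancel in
`∑ cₙ D (s n)`, so its degree is the largest one occurring. A combination in the kernel therefore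
involves only those `s n` that `D` kills, and every degree attained by `D` is the degree of some
`D (s n)`. For `n > N` the latter degrees fill exactly the integers above `N + h`. -/

section DistinctDegrees

variable {R M ι : Type*} [Semiring R] [NoZeroDivisors R] [AddCommMonoid M] [Module R M]

theorem degree_linearCombination_eq_sup {f : ι → R[X]}
    (hf : Set.InjOn (natDegree ∘ f) (Function.support f)) (c : ι →₀ R) :
    (Finsupp.linearCombination R f c).degree = c.support.sup (degree ∘ f) := by
  have degree_smul_eq : ∀ i ∈ c.support, (c i • f i).degree = (f i).degree := fun i hi => by
    rw [smul_eq_C_mul, degree_C_mul (Finsupp.mem_support_iff.1 hi)]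
  have degrees_ne : Set.Pairwise {i | i ∈ c.support ∧ c i • f i ≠ 0}
      (Function.onFun Ne (degree ∘ fun i => c i • f i)) := by
    rintro i ⟨hi, hi0⟩ j ⟨hj, hj0⟩ hij hdeg
    simp only [Function.comp_apply, degree_smul_eq i hi, degree_smul_eq j hj] at hdeg
    exact hij (hf (right_ne_zero_of_smul hi0) (right_ne_zero_of_smul hj0)
      (natDegree_eq_of_degree_eq hdeg))
  rw [Finsupp.linearCombination_apply, Finsupp.sum, degree_sum_eq_of_disjoint _ _ degrees_ne]
  exact Finset.sup_congr rfl degree_smul_eq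

theorem eq_zero_of_mem_support_of_linearCombination_eq_zero {f : ι → R[X]}
    (hf : Set.InjOn (natDegree ∘ f) (Function.support f)) {c : ι →₀ R}
    (hc : Finsupp.linearCombination R f c = 0) {i : ι} (hi : i ∈ c.support) : f i = 0 := by
  have hsup := degree_linearCombination_eq_sup hf c
  rw [hc, degree_zero, eq_comm, Finset.sup_eq_bot_iff] at hsup
  exact degree_eq_bot.1 (hsup i hi)

theorem exists_degree_eq_degree_linearCombination {f : ι → R[X]}
    (hf : Set.InjOn (natDegree ∘ f) (Function.support f)) {c : ι →₀ R}
    (hc : Finsupp.linearCombination R f c ≠ 0) :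
    ∃ i, (f i).degree = (Finsupp.linearCombination R f c).degree := by
  have support_nonempty : c.support.Nonempty :=
    Finsupp.support_nonempty_iff.2 fun h => hc (h ▸ map_zero _)
  obtain ⟨i, -, hi⟩ := Finset.exists_mem_eq_sup _ support_nonempty (degree ∘ f)
  exact ⟨i, ((degree_linearCombination_eq_sup hf c).trans hi).symm⟩

theorem span_image_eq_ker_of_injOn_natDegree (D : M →ₗ[R] R[X]) {s : ι → M}
    (hspan : Submodule.span R (Set.range s) = ⊤)
    (hinj : Set.InjOn (natDegree ∘ D ∘ s) (Function.support (D ∘ s))) :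
    Submodule.span R (s '' {i | D (s i) = 0}) = LinearMap.ker D := by
  refine le_antisymm (Submodule.span_le.2 (Set.image_subset_iff.2 fun _ => id)) fun q hq => ?_
  obtain ⟨c, rfl⟩ := (span_range_eq_top_iff_surjective_finsuppLinearCombination R).1 hspan q
  rw [LinearMap.mem_ker, Finsupp.apply_linearCombination] at hq
  exact (Finsupp.mem_span_image_iff_linearCombination R).2
    ⟨c, fun _ hi => eq_zero_of_mem_support_of_linearCombination_eq_zero hinj hq hi, rfl⟩

/-- The natural numbers that are not the degree of any nonzero polynomial in the range of `D`.
Excluding `D q = 0` keeps the convention `natDegree 0 = 0` from making `0` accessible. -/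
def inaccessibleDegrees (D : M →ₗ[R] R[X]) : Set ℕ :=
  {m | ∀ q, D q ≠ 0 → (D q).natDegree ≠ m}

theorem inaccessibleDegrees_eq_compl_image (D : M →ₗ[R] R[X]) {s : ι → M}
    (hspan : Submodule.span R (Set.range s) = ⊤)
    (hinj : Set.InjOn (natDegree ∘ D ∘ s) (Function.support (D ∘ s))) :
    inaccessibleDegrees D = ((natDegree ∘ D ∘ s) '' Function.support (D ∘ s))ᶜ := by
  refine Set.Subset.antisymm ?_ fun m hm q hq hqm => hm ?_
  · rintro m hm ⟨i, hi, him⟩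
    exact hm (s i) hi him
  · obtain ⟨c, rfl⟩ := (span_range_eq_top_iff_surjective_finsuppLinearCombination R).1 hspan q
    rw [Finsupp.apply_linearCombination] at hq hqm
    obtain ⟨i, hi⟩ := exists_degree_eq_degree_linearCombination hinj hq
    refine ⟨i, fun hi0 => hq ?_, (natDegree_eq_of_degree_eq hi).trans hqm⟩
    rwa [hi0, degree_zero, eq_comm, degree_eq_bot] at hi

end DistinctDegrees

theorem compl_image_eq_of_forall_gt_eq_add {d : ℕ → ℕ} {A : Set ℕ} {N : ℕ} {h : ℤ}
    (htail : ∀ n, N < n → n ∈ A ∧ (d n : ℤ) = n + h) :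
    (d '' A)ᶜ = {m : ℕ | (m : ℤ) ≤ N + h} \ d '' (A ∩ Set.Iic N) := by
  refine Set.Subset.antisymm (fun m hm => ⟨?_, ?_⟩) ?_
  · refine le_of_not_gt fun hlt : (N : ℤ) + h < m => ?_
    obtain ⟨n, hn⟩ := Int.eq_ofNat_of_zero_le (show 0 ≤ (m : ℤ) - h by lia)
    obtain ⟨hnA, hdn⟩ := htail n (by lia)
    exact hm ⟨n, hnA, by lia⟩
  · exact fun hm' => hm (Set.image_mono Set.inter_subset_left hm')
  · rintro _ ⟨hle : _ ≤ (N : ℤ) + h, hm⟩ ⟨n, hnA, rfl⟩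
    have N_lt : N < n := lt_of_not_ge fun hnN => hm ⟨n, ⟨hnA, hnN⟩, rfl⟩
    have := (htail n N_lt).2
    lia

theorem stmt_16_general {R M : Type*} [Semiring R] [NoZeroDivisors R] [AddCommMonoid M]
    [Module R M] (D : M →ₗ[R] R[X]) {s : ℕ → M} (hspan : Submodule.span R (Set.range s) = ⊤)
    (hinj : Set.InjOn (natDegree ∘ D ∘ s) (Function.support (D ∘ s))) {N : ℕ} {h : ℤ}
    (htail : ∀ n, N < n → D (s n) ≠ 0 ∧ ((D (s n)).natDegree : ℤ) = n + h) :
    Submodule.span R (s '' {n | D (s n) = 0}) = LinearMap.ker D ∧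
    inaccessibleDegrees D = {m : ℕ | (m : ℤ) ≤ N + h} \
      (natDegree ∘ D ∘ s) '' (Function.support (D ∘ s) ∩ Set.Iic N) :=
  ⟨span_image_eq_ker_of_injOn_natDegree D hspan hinj,
    (inaccessibleDegrees_eq_compl_image D hspan hinj).trans
      (compl_image_eq_of_forall_gt_eq_add htail)⟩

/-- Let `s = (s n)` be any basis of `ℝ[x]` with `s n = Xⁿ` for
`n > N` such that `n ↦ deg D (s n)` is strictly increasing on `{n : D (s n) ≠ 0}`.
Then `{s n : D (s n) = 0}` spans the kernel of `D`, and the set of inaccessible degrees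
satisfies `S = {m : m ≤ N + h} \ {deg D (s n) : n ≤ N, D (s n) ≠ 0}`. -/
theorem stmt_16 (ν : ℕ) (p : ℕ → Polynomial ℝ) (hp : ∃ i ≤ ν, p i ≠ 0)
    (D : Polynomial ℝ →ₗ[ℝ] Polynomial ℝ)
    (hD : ∀ q, D q = ∑ i ∈ Finset.range (ν + 1), p i * (Polynomial.derivative^[i] q))
    (h : ℤ)
    (hh : IsGreatest {z : ℤ | ∃ i ≤ ν, p i ≠ 0 ∧ z = ((p i).natDegree : ℤ) - i} h)
    (N : ℕ)
    (hN : ∀ n : ℕ, N < n → D (X ^ n) ≠ 0 ∧ ((D (X ^ n)).natDegree : ℤ) = n + h)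
    (S : Set ℕ)
    (hS : S = {s : ℕ | ∀ q : Polynomial ℝ, D q ≠ 0 → (D q).natDegree ≠ s})
    (s : ℕ → Polynomial ℝ)
    (hbasis : LinearIndependent ℝ s ∧ Submodule.span ℝ (Set.range s) = ⊤)
    (htail : ∀ n : ℕ, N < n → s n = X ^ n)
    (hmono : ∀ m n : ℕ, D (s m) ≠ 0 → D (s n) ≠ 0 → m < n →
      (D (s m)).natDegree < (D (s n)).natDegree) :
    Submodule.span ℝ {r : Polynomial ℝ | ∃ n : ℕ, D (s n) = 0 ∧ r = s n} =
      LinearMap.ker D ∧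
    S = {m : ℕ | (m : ℤ) ≤ N + h} \
      {m : ℕ | ∃ n ≤ N, D (s n) ≠ 0 ∧ m = (D (s n)).natDegree} := by
  have hinj : Set.InjOn (natDegree ∘ D ∘ s) (Function.support (D ∘ s)) :=
    StrictMonoOn.injOn fun m hm n hn => hmono m n hm hn
  simpa [hS, inaccessibleDegrees, Set.image, eq_comm, and_comm, and_assoc] using
    stmt_16_general D hbasis.2 hinj fun n hn => htail n hn ▸ hN n hn
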